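/- Assume G is an elementary abelian 2-group with |G| = n, and assume that the image of n in F is not equal to any of 1, 2, 4. Then the Terwilliger F-algebra T is isomorphic, as an F-algebra, to M₆(F) × M₅(F) × F. -/

import Mathlib

open Matrix

abbrev XG (G : Type) [Group G] : Type := {v : Fin 3 → G // v 0 * v 1 = v 2}

def cIdx : Fin 5 → Fin 3
  | 0 => 0
  | 1 => 0
  | 2 => 1
  | 3 => 2
  | 4 => 0

def rel {G : Type} [Group G] (i : Fin 5) (y z : XG G) : Prop :=
  if i = 0 then y = z
  else if i = 4 then ∀ d : Fin 3, y.1 d ≠ z.1 d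
  else y ≠ z ∧ y.1 (cIdx i) = z.1 (cIdx i)

instance {G : Type} [Group G] [DecidableEq G] (i : Fin 5) (y z : XG G) :
    Decidable (rel i y z) := by
  unfold rel
  infer_instance

def Adj (F : Type) [Field F] {G : Type} [Group G] [DecidableEq G] (i : Fin 5) :
    Matrix (XG G) (XG G) F :=
  Matrix.of fun y z => if rel i y z then 1 else 0

def DualE (F : Type) [Field F] {G : Type} [Group G] [DecidableEq G] (x : XG G) (i : Fin 5) :
    Matrix (XG G) (XG G) F :=
  Matrix.of fun y z => if y = z ∧ rel i x y then 1 else 0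

def AllOne (F : Type) [Field F] (G : Type) [Group G] : Matrix (XG G) (XG G) F :=
  Matrix.of fun _ _ => 1

def genSet (F : Type) [Field F] (G : Type) [Group G] [Fintype G] [DecidableEq G]
    (x : XG G) : Set (Matrix (XG G) (XG G) F) :=
  {M | ∃ a b c : Fin 5, M = DualE F x a * Adj F b * DualE F x c}

def TerwilligerAlg (F : Type) [Field F] (G : Type) [Group G] [Fintype G] [DecidableEq G]
    (x : XG G) : Subalgebra F (Matrix (XG G) (XG G) F) :=
  Algebra.adjoin F (genSet F G x)

/-!
Label the points of `X_G` by their coordinates relative to `x`. The coordinates, and the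
identifications with `G` of the three lines through `x`, give six `G × X_G` incidence matrices, and
`T` is generated by the products `incᵤᵀ * inc_v` together with the matrices `s_a s_bᵀ`, where `s_a`
is the indicator vector of the `a`-th sphere around `x`. Exponent two makes the two relative
coordinates other than the `i`-th agree on the `i`-th line, so each of them yields the same
identification with `G`.

Let `P` be the projection of `F ^ G` along the plane spanned by the basis vector at `1` and the
all-one vector; it exists because `n ≠ 1` in `F`. The matrices `incᵤᵀ * P * inc_v` differ from
`incᵤᵀ * inc_v` by combinations of the `s_a s_bᵀ`, annihilate the spheres, and multiply like matrix
units twisted by the Gram matrix of the incidence matrices, of determinant `(n - 1)² (n - 4)`. The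
`s_a s_bᵀ` multiply like matrix units twisted by the diagonal matrix of the valencies, of
determinant `(n - 1)⁴ (n - 2)`. When both determinants are units these families span orthogonal
copies of `M₆(F)` and `M₅(F)`. The last factor `F` is the span of the complementary idempotent,
which is nonzero: `n` is a power of two, hence at least `8`, and `6 n < n²` leaves a vector killed
by all six incidence matrices.
-/

section OrthogonalCoprod

variable {F A B R : Type*} [CommSemiring F]

section Semiring

variable [NonUnitalNonAssocSemiring A] [Module F A] [NonUnitalNonAssocSemiring B] [Module F B]
  [NonUnitalNonAssocSemiring R] [Module F R]

/-- The sum `(a, b) ↦ f a + g b` of two algebra homomorphisms with mutually annihilating images. -/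
def orthogonalCoprod (f : A →ₙₐ[F] R) (g : B →ₙₐ[F] R) (hfg : ∀ a b, f a * g b = 0)
    (hgf : ∀ b a, g b * f a = 0) : A × B →ₙₐ[F] R :=
  { (f : A →ₗ[F] R).coprod (g : B →ₗ[F] R) with
    map_zero' := by simp
    map_mul' := fun a b => by simp [mul_add, add_mul, hfg, hgf] }

theorem orthogonalCoprod_apply {f : A →ₙₐ[F] R} {g : B →ₙₐ[F] R} {hfg : ∀ a b, f a * g b = 0}
    {hgf : ∀ b a, g b * f a = 0} (x : A × B) :
    orthogonalCoprod f g hfg hgf x = f x.1 + g x.2 := rfl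

end Semiring

theorem orthogonalCoprod_injective [NonAssocRing A] [Module F A] [NonUnitalNonAssocRing B]
    [Module F B] [NonUnitalNonAssocRing R] [Module F R] {f : A →ₙₐ[F] R} {g : B →ₙₐ[F] R}
    {hfg : ∀ a b, f a * g b = 0} {hgf : ∀ b a, g b * f a = 0}
    (hf : Function.Injective f) (hg : Function.Injective g) :
    Function.Injective (orthogonalCoprod f g hfg hgf) := by
  rw [injective_iff_map_eq_zero] at hf hg ⊢
  rintro ⟨a, b⟩ h
  rw [orthogonalCoprod_apply] at h
  have hfa : f a = 0 := by simpa [mul_add, hfg, ← map_mul] using congrArg (f 1 * ·) h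
  have hgb : g b = 0 := by simpa [hfa] using h
  exact Prod.ext (hf a hfa) (hg b hgb)

theorem adjoin_range_orthogonalCoprod [NonUnitalNonAssocSemiring A] [Module F A]
    [NonUnitalNonAssocSemiring B] [Module F B] [Semiring R] [Algebra F R]
    {f : A →ₙₐ[F] R} {g : B →ₙₐ[F] R}
    {hfg : ∀ a b, f a * g b = 0} {hgf : ∀ b a, g b * f a = 0} :
    Algebra.adjoin F (Set.range (orthogonalCoprod f g hfg hgf)) =
      Algebra.adjoin F (Set.range f) ⊔ Algebra.adjoin F (Set.range g) := by
  rw [← Algebra.adjoin_union]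
  apply le_antisymm <;> rw [Algebra.adjoin_le_iff]
  · rintro _ ⟨x, rfl⟩
    exact add_mem (Algebra.subset_adjoin (.inl ⟨x.1, rfl⟩))
      (Algebra.subset_adjoin (.inr ⟨x.2, rfl⟩))
  · rintro _ (⟨a, rfl⟩ | ⟨b, rfl⟩)
    · exact Algebra.subset_adjoin ⟨(a, 0), by simp [orthogonalCoprod_apply]⟩
    · exact Algebra.subset_adjoin ⟨(0, b), by simp [orthogonalCoprod_apply]⟩

end OrthogonalCoprod

section ExtendByUnit

variable {F A R : Type*} [CommRing F] [Ring A] [Algebra F A] [Ring R] [Algebra F R]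

/-- The unital homomorphism `(a, c) ↦ f a + c (1 - f 1)` extending a homomorphism `f` that need
not preserve the identity. -/
def extendByUnit (f : A →ₙₐ[F] R) : A × F →ₐ[F] R :=
  AlgHom.ofLinearMap ((f : A →ₗ[F] R).coprod (LinearMap.toSpanSingleton F R (1 - f 1)))
    (by simp)
    (fun x y => by
      simp [mul_add, add_mul, mul_sub, sub_mul, ← map_mul, smul_smul, mul_comm x.2])

theorem extendByUnit_apply (f : A →ₙₐ[F] R) (x : A × F) :
    extendByUnit f x = f x.1 + x.2 • (1 - f 1) := rfl

theorem extendByUnit_range (f : A →ₙₐ[F] R) :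
    (extendByUnit f).range = Algebra.adjoin F (Set.range f) := by
  have hf (a : A) : f a ∈ Algebra.adjoin F (Set.range f) := Algebra.subset_adjoin ⟨a, rfl⟩
  apply le_antisymm
  · rintro _ ⟨x, rfl⟩
    exact add_mem (hf _) (Subalgebra.smul_mem _ (sub_mem (one_mem _) (hf 1)) _)
  · rw [Algebra.adjoin_le_iff]
    rintro _ ⟨a, rfl⟩
    exact ⟨(a, 0), by simp [extendByUnit_apply]⟩

theorem extendByUnit_injective [IsDomain F] [Module.IsTorsionFree F R] {f : A →ₙₐ[F] R}
    (hf : Function.Injective f) (hf1 : f 1 ≠ 1) : Function.Injective (extendByUnit f) := by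
  rw [injective_iff_map_eq_zero] at hf ⊢
  rintro ⟨a, c⟩ h
  rw [extendByUnit_apply] at h
  have hc : c = 0 := by
    have h' : c • (1 - f 1) = 0 := by
      simpa [mul_add, mul_sub, sub_mul, ← map_mul] using congrArg ((1 - f 1) * ·) h
    exact (smul_eq_zero.mp h').resolve_right (sub_ne_zero.mpr hf1.symm)
  exact Prod.ext (hf a (by simpa [hc] using h)) hc

end ExtendByUnit

section MatrixComb

variable {F M R U : Type*} [CommSemiring F] [Fintype U] [DecidableEq U]

/-- The linear combination `∑ u, ∑ v, A u v • m u v` of a family `m` whose coefficients form the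
matrix `A`, as a linear map in `A`. -/
def matrixComb [AddCommMonoid M] [Module F M] (m : U → U → M) : Matrix U U F →ₗ[F] M :=
  Matrix.liftLinear F fun u v => LinearMap.toSpanSingleton F M (m u v)

theorem matrixComb_apply [AddCommMonoid M] [Module F M] (m : U → U → M) (A : Matrix U U F) :
    matrixComb m A = ∑ u, ∑ v, A u v • m u v := by
  simp [matrixComb, Matrix.liftLinear_apply]

theorem matrixComb_single [AddCommMonoid M] [Module F M] (m : U → U → M) (u v : U) (c : F) :
    matrixComb m (Matrix.single u v c) = c • m u v := by
  simp [matrixComb]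

variable [NonUnitalNonAssocSemiring R] [Module F R] {m : U → U → R} {r : R}

theorem matrixComb_mul_eq_zero [IsScalarTower F R R] (h : ∀ u v, m u v * r = 0)
    (A : Matrix U U F) : matrixComb m A * r = 0 := by
  simp [matrixComb_apply, Finset.sum_mul, smul_mul_assoc, h]

theorem mul_matrixComb_eq_zero [SMulCommClass F R R] (h : ∀ u v, r * m u v = 0)
    (A : Matrix U U F) : r * matrixComb m A = 0 := by
  simp [matrixComb_apply, Finset.mul_sum, mul_smul_comm, h]

end MatrixComb

theorem injective_of_isSimpleRing {A R : Type*} [Ring A] [IsSimpleRing A]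
    [NonUnitalNonAssocRing R] (f : A →ₙ+* R) {a : A} (ha : f a ≠ 0) : Function.Injective f := by
  rw [← TwoSidedIdeal.ker_eq_bot]
  refine (eq_bot_or_eq_top _).resolve_right fun h => ha ?_
  rw [← TwoSidedIdeal.mem_ker f, h]
  trivial

/-- A family `m` multiplying like the standard basis of the Munn algebra (the algebra of a Rees
matrix semigroup) with sandwich matrix `Γ`; matrix units are the case `Γ = 1`. -/
def IsMunnFamily {F R U : Type*} [SMul F R] [Mul R] (Γ : Matrix U U F) (m : U → U → R) : Prop :=
  ∀ u v w z, m u v * m w z = Γ v w • m u z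

namespace IsMunnFamily

variable {F R U : Type*} [Fintype U] [DecidableEq U]

section CommRing

variable [CommRing F] [Ring R] [Algebra F R] {Γ : Matrix U U F} {m : U → U → R}

theorem matrixComb_mul (hm : IsMunnFamily Γ m) (A B : Matrix U U F) :
    matrixComb m A * matrixComb m B = matrixComb m (A * Γ * B) := by
  have h : (LinearMap.mul F R).compl₁₂ (matrixComb m) (matrixComb m) =
      ((LinearMap.mul F (Matrix U U F)).compr₂ (matrixComb m)).compl₁₂
        (LinearMap.mulRight F Γ) LinearMap.id := by
    refine Matrix.ext_linearMap _ fun u v => LinearMap.ext_ring ?_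
    refine Matrix.ext_linearMap _ fun w z => LinearMap.ext_ring ?_
    simp [matrixComb_single, hm u v w z]
  exact LinearMap.congr_fun₂ h A B

/-- For an invertible sandwich matrix `Γ`, the homomorphism from the matrix algebra whose value
at `A` is the combination of the family with coefficients `A * Γ⁻¹`. -/
noncomputable def hom (hm : IsMunnFamily Γ m) (hΓ : IsUnit Γ.det) : Matrix U U F →ₙₐ[F] R :=
  { matrixComb m ∘ₗ LinearMap.mulRight F Γ⁻¹ with
    map_zero' := by simp
    map_mul' := fun A B => by
      simp [hm.matrixComb_mul, Matrix.nonsing_inv_mul_cancel_right _ _ hΓ, Matrix.mul_assoc] }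

theorem hom_apply (hm : IsMunnFamily Γ m) (hΓ : IsUnit Γ.det) (A : Matrix U U F) :
    hm.hom hΓ A = matrixComb m (A * Γ⁻¹) := rfl

theorem hom_single_mul (hm : IsMunnFamily Γ m) (hΓ : IsUnit Γ.det) (u v : U) :
    hm.hom hΓ (Matrix.single u v 1 * Γ) = m u v := by
  rw [hom_apply, Matrix.mul_nonsing_inv_cancel_right _ _ hΓ, matrixComb_single, one_smul]

theorem adjoin_range_hom (hm : IsMunnFamily Γ m) (hΓ : IsUnit Γ.det) :
    Algebra.adjoin F (Set.range (hm.hom hΓ)) =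
      Algebra.adjoin F (Set.range (Function.uncurry m)) := by
  apply le_antisymm <;> rw [Algebra.adjoin_le_iff]
  · rintro _ ⟨A, rfl⟩
    rw [hom_apply, matrixComb_apply]
    exact sum_mem fun u _ => sum_mem fun v _ =>
      Subalgebra.smul_mem _ (Algebra.subset_adjoin (Set.mem_range_self (u, v))) _
  · rintro _ ⟨⟨u, v⟩, rfl⟩
    rw [Function.uncurry_apply_pair, ← hm.hom_single_mul hΓ u v]
    exact Algebra.subset_adjoin (Set.mem_range_self _)

end CommRing

theorem hom_injective [Field F] [Ring R] [Algebra F R] {Γ : Matrix U U F} {m : U → U → R}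
    (hm : IsMunnFamily Γ m) (hΓ : IsUnit Γ.det) {u v : U} (huv : m u v ≠ 0) :
    Function.Injective (hm.hom hΓ) :=
  have : Nonempty U := ⟨u⟩
  injective_of_isSimpleRing (hm.hom hΓ : Matrix U U F →ₙ+* R)
    (a := Matrix.single u v 1 * Γ) (ne_of_eq_of_ne (hm.hom_single_mul hΓ u v) huv)

end IsMunnFamily

theorem nonempty_adjoin_sup_adjoin_algEquiv {F R U V : Type*} [Field F] [Ring R] [Algebra F R]
    [Fintype U] [DecidableEq U] [Fintype V] [DecidableEq V] {Γ : Matrix U U F} {Λ : Matrix V V F}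
    {m : U → U → R} {k : V → V → R} (hm : IsMunnFamily Γ m) (hk : IsMunnFamily Λ k)
    (hΓ : IsUnit Γ.det) (hΛ : IsUnit Λ.det) {u v : U} (hm₀ : m u v ≠ 0) {a b : V}
    (hk₀ : k a b ≠ 0) (hmk : ∀ u v a b, m u v * k a b = 0) (hkm : ∀ a b u v, k a b * m u v = 0)
    {z : R} (hz : z ≠ 0) (hmz : ∀ u v, m u v * z = 0) (hkz : ∀ a b, k a b * z = 0) :
    Nonempty (↥(Algebra.adjoin F (Set.range (Function.uncurry m)) ⊔
      Algebra.adjoin F (Set.range (Function.uncurry k))) ≃ₐ[F]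
        Matrix U U F × Matrix V V F × F) := by
  let f := orthogonalCoprod (hm.hom hΓ) (hk.hom hΛ)
    (fun _ _ => matrixComb_mul_eq_zero (fun u v => mul_matrixComb_eq_zero (hmk u v) _) _)
    (fun _ _ => matrixComb_mul_eq_zero (fun a b => mul_matrixComb_eq_zero (hkm a b) _) _)
  have hf : Function.Injective f :=
    orthogonalCoprod_injective (hm.hom_injective hΓ hm₀) (hk.hom_injective hΛ hk₀)
  have hf₁ : f 1 ≠ 1 := fun h => hz <|
    calc z = f 1 * z := by rw [h, one_mul]
      _ = hm.hom hΓ 1 * z + hk.hom hΛ 1 * z := add_mul _ _ _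
      _ = 0 := by
        simp only [IsMunnFamily.hom_apply, matrixComb_mul_eq_zero hmz,
          matrixComb_mul_eq_zero hkz, add_zero]
  have hrange : (extendByUnit f).range = _ :=
    (extendByUnit_range f).trans adjoin_range_orthogonalCoprod
  rw [hm.adjoin_range_hom hΓ, hk.adjoin_range_hom hΛ] at hrange
  let assoc : ((Matrix U U F × Matrix V V F) × F) ≃ₐ[F] Matrix U U F × Matrix V V F × F :=
    AlgEquiv.ofLinearEquiv (LinearEquiv.prodAssoc F _ _ _) rfl fun _ _ => rfl
  rw [← hrange]
  exact ⟨(AlgEquiv.ofInjective _ (extendByUnit_injective hf hf₁)).symm.trans assoc⟩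

section Coordinates

variable {G : Type} [Group G]

/-- A point of `X_G` is determined by its first two coordinates, which are arbitrary. -/
def coordEquiv : XG G ≃ G × G where
  toFun y := (y.1 0, y.1 1)
  invFun p := ⟨![p.1, p.2, p.1 * p.2], rfl⟩
  left_inv y := by
    ext i
    fin_cases i
    exacts [rfl, rfl, y.2]
  right_inv _ := rfl

theorem card_XG [Fintype G] [DecidableEq G] : Fintype.card (XG G) = Fintype.card G ^ 2 := by
  rw [Fintype.card_congr coordEquiv, Fintype.card_prod, sq]

theorem XG_eq_of_coord_eq {y z : XG G} {i j : Fin 3} (hij : i ≠ j) (hi : y.1 i = z.1 i)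
    (hj : y.1 j = z.1 j) : y = z := by
  have h₀ (h : y.1 0 = z.1 0) : y.1 1 = z.1 1 ↔ y.1 2 = z.1 2 := by
    rw [← y.2, ← z.2, h, mul_right_inj]
  have h₁ (h : y.1 1 = z.1 1) : y.1 0 = z.1 0 ↔ y.1 2 = z.1 2 := by
    rw [← y.2, ← z.2, h, mul_left_inj]
  suffices y.1 0 = z.1 0 ∧ y.1 1 = z.1 1 from coordEquiv.injective (Prod.ext this.1 this.2)
  fin_cases i <;> fin_cases j <;> simp_all

/-- The `i`-th coordinate of `y` relative to the base point `x`. -/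
def relCoord (x y : XG G) (i : Fin 3) : G := (x.1 i)⁻¹ * y.1 i

theorem relCoord_inj {x y z : XG G} {i : Fin 3} :
    relCoord x y i = relCoord x z i ↔ y.1 i = z.1 i :=
  mul_right_inj _

theorem relCoord_eq_one {x y : XG G} {i : Fin 3} : relCoord x y i = 1 ↔ x.1 i = y.1 i :=
  inv_mul_eq_one

theorem relCoord_pair_bijective [Finite G] (x : XG G) {i j : Fin 3} (hij : i ≠ j) :
    Function.Bijective fun y => (relCoord x y i, relCoord x y j) := by
  rw [Nat.bijective_iff_injective_and_card]
  refine ⟨fun y z h => ?_, Nat.card_congr coordEquiv⟩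
  rw [Prod.mk.injEq, relCoord_inj, relCoord_inj] at h
  exact XG_eq_of_coord_eq hij h.1 h.2

theorem sum_relCoord_pair {M : Type*} [AddCommMonoid M] [Fintype G] [DecidableEq G] (x : XG G)
    {i j : Fin 3} (hij : i ≠ j) (f : G → G → M) :
    ∑ y, f (relCoord x y i) (relCoord x y j) = ∑ g, ∑ h, f g h := by
  rw [← Fintype.sum_prod_type']
  exact Fintype.sum_bijective _ (relCoord_pair_bijective x hij) _ _ fun _ => rfl

theorem relCoord_eq_of_relCoord_eq_one (helem : ∀ a : G, a ^ 2 = 1) {x y : XG G} {i j k : Fin 3}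
    (hj : j ≠ i) (hk : k ≠ i) (h : relCoord x y i = 1) : relCoord x y j = relCoord x y k := by
  have hcomm (a b : G) : Commute a b :=
    Commute.of_orderOf_dvd_two (fun g => orderOf_dvd_of_pow_eq_one (helem g)) a b
  have hprod : relCoord x y 0 * relCoord x y 1 = relCoord x y 2 := by
    rw [relCoord, relCoord, (hcomm _ _).mul_mul_mul_comm, ← (hcomm _ _).mul_inv, x.2, y.2, relCoord]
  have h₀ (h : relCoord x y 0 = 1) : relCoord x y 1 = relCoord x y 2 := by
    rw [← hprod, h, one_mul]
  have h₁ (h : relCoord x y 1 = 1) : relCoord x y 0 = relCoord x y 2 := by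
    rw [← hprod, h, mul_one]
  have h₂ (h : relCoord x y 2 = 1) : relCoord x y 0 = relCoord x y 1 :=
    mul_left_cancel ((sq (relCoord x y 0)).symm.trans ((helem _).trans (hprod.trans h).symm))
  fin_cases i <;> fin_cases j <;> fin_cases k <;> simp_all

end Coordinates

section Relations

variable {G : Type} [Group G]

/-- The index of the relation of agreeing in the `i`-th coordinate only. -/
def lineRel (i : Fin 3) : Fin 5 := i.succ.castSucc

theorem rel_zero {y z : XG G} : rel 0 y z ↔ y = z := Iff.rfl

theorem rel_lineRel {i : Fin 3} {y z : XG G} :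
    rel (lineRel i) y z ↔ y ≠ z ∧ y.1 i = z.1 i := by
  fin_cases i <;> rfl

theorem forall_rel_index {p : Fin 5 → Prop} : (∀ a, p a) ↔ p 0 ∧ (∀ i, p (lineRel i)) ∧ p 4 := by
  rw [Fin.forall_fin_succ, Fin.forall_fin_succ']
  rfl

theorem existsUnique_rel (y z : XG G) : ∃! a, rel a y z := by
  by_cases hyz : y = z
  · exact ⟨0, hyz, forall_rel_index.mpr
      ⟨fun _ => rfl, fun _ h => absurd hyz (rel_lineRel.mp h).1,
        fun h => absurd (congrArg (·.1 0) hyz) (h 0)⟩⟩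
  by_cases hline : ∃ i, y.1 i = z.1 i
  · obtain ⟨i, hi⟩ := hline
    have hunique (j : Fin 3) (hj : rel (lineRel j) y z) : lineRel j = lineRel i :=
      congrArg lineRel <| by_contra fun hji =>
        hyz (XG_eq_of_coord_eq hji (rel_lineRel.mp hj).2 hi)
    exact ⟨lineRel i, rel_lineRel.mpr ⟨hyz, hi⟩, forall_rel_index.mpr
      ⟨fun h => absurd h hyz, hunique, fun h => absurd hi (h i)⟩⟩
  · exact ⟨4, not_exists.mp hline, forall_rel_index.mpr
      ⟨fun h => absurd h hyz, fun i h => absurd ⟨i, (rel_lineRel.mp h).2⟩ hline,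
        fun _ => rfl⟩⟩

theorem sum_rel_index {M : Type*} [AddCommMonoid M] (f : Fin 5 → M) :
    ∑ a, f a = f 0 + ∑ i, f (lineRel i) + f 4 := by
  rw [Fin.sum_univ_succ, Fin.sum_univ_castSucc, ← add_assoc]
  rfl

theorem mem_of_lineRel_mem {M S : Type*} [AddCommGroup M] [SetLike S M] [AddSubgroupClass S M]
    {N : S} {f : Fin 5 → M} (h₀ : f 0 ∈ N) (hline : ∀ i, f 0 + f (lineRel i) ∈ N)
    (hsum : ∑ a, f a ∈ N) (a : Fin 5) : f a ∈ N := by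
  have hmem (i : Fin 3) : f (lineRel i) ∈ N := (add_mem_cancel_left h₀).mp (hline i)
  refine forall_rel_index (p := (f · ∈ N)) |>.mpr ⟨h₀, hmem, ?_⟩ a
  rw [sum_rel_index] at hsum
  exact (add_mem_cancel_left (add_mem h₀ (sum_mem fun i _ => hmem i))).mp hsum

end Relations

section Spheres

variable (F : Type) [Field F] {G : Type} [Group G] [DecidableEq G]

theorem Adj_apply (a : Fin 5) (y z : XG G) :
    Adj F a y z = if rel a y z then 1 else 0 := rfl

theorem Adj_zero : Adj F 0 = (1 : Matrix (XG G) (XG G) F) := by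
  ext y z
  simp only [Adj_apply, rel_zero, one_apply]

theorem Adj_zero_add_Adj_lineRel_apply (i : Fin 3) (y z : XG G) :
    Adj F 0 y z + Adj F (lineRel i) y z = if y.1 i = z.1 i then 1 else 0 := by
  simp only [Adj_apply, rel_zero, rel_lineRel]
  by_cases h : y = z <;> simp [h]

theorem sum_Adj_apply (y z : XG G) : ∑ a, Adj F a y z = 1 := by
  obtain ⟨a, ha, hunique⟩ := existsUnique_rel y z
  calc ∑ b, Adj F b y z = Adj F a y z :=
        Fintype.sum_eq_single a fun b hb => if_neg fun h => hb (hunique b h)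
    _ = 1 := if_pos ha

theorem sum_Adj : ∑ a, Adj F a = (vecMulVec 1 1 : Matrix (XG G) (XG G) F) := by
  ext y z
  rw [Matrix.sum_apply, sum_Adj_apply, vecMulVec_apply, Pi.one_apply, Pi.one_apply, mul_one]

/-- The indicator vector of the points in relation `R_a` with the base point `x`. -/
def sphere (x : XG G) (a : Fin 5) : XG G → F := Adj F a x

/-- The indicator vector of the points agreeing with `x` in the `i`-th coordinate. -/
def lineInd (x : XG G) (i : Fin 3) : XG G → F := fun y => if relCoord x y i = 1 then 1 else 0

variable (x : XG G)

theorem sphere_zero : sphere F x 0 = Pi.single x 1 := by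
  ext y
  rw [sphere, Adj_zero, one_apply, Pi.single_apply]
  simp only [eq_comm]

theorem sphere_zero_add_sphere_lineRel (i : Fin 3) :
    sphere F x 0 + sphere F x (lineRel i) = lineInd F x i := by
  ext y
  simp only [lineInd, relCoord_eq_one]
  exact Adj_zero_add_Adj_lineRel_apply F i x y

theorem sum_sphere : ∑ a, sphere F x a = 1 := by
  ext y
  rw [Finset.sum_apply]
  exact sum_Adj_apply F x y

theorem DualE_eq_diagonal (a : Fin 5) : DualE F x a = diagonal (sphere F x a) := by
  ext y z
  rw [diagonal_apply, sphere, Adj_apply, ← ite_and]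
  rfl

theorem DualE_zero_add_DualE_lineRel (i : Fin 3) :
    DualE F x 0 + DualE F x (lineRel i) = diagonal (lineInd F x i) := by
  rw [DualE_eq_diagonal, DualE_eq_diagonal, diagonal_add, ← sphere_zero_add_sphere_lineRel]
  rfl

theorem sum_DualE : ∑ a, DualE F x a = 1 := by
  simp only [DualE_eq_diagonal]
  rw [← diagonal_one, ← Pi.one_def, ← sum_sphere F x]
  exact (map_sum (diagonalAddMonoidHom (XG G) F) _ _).symm

theorem sphere_mul_sphere_self (a : Fin 5) : sphere F x a * sphere F x a = sphere F x a := by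
  ext y
  simp [sphere, Adj_apply]

theorem sphere_mul_sphere {a b : Fin 5} (hab : a ≠ b) : sphere F x a * sphere F x b = 0 := by
  ext y
  have h : ¬(rel a x y ∧ rel b x y) := fun h => hab ((existsUnique_rel x y).unique h.1 h.2)
  rw [Pi.mul_apply, sphere, sphere, Adj_apply, Adj_apply, ite_zero_mul_ite_zero, if_neg h]
  rfl

end Spheres

section Incidence

variable (F : Type) [Field F] {G : Type} [Group G] [DecidableEq G] (x : XG G)

/-- The incidence matrix between `G` and `X_G` of the `i`-th relative coordinate. -/
def coordInc (i : Fin 3) : Matrix G (XG G) F :=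
  of fun g y => if relCoord x y i = g then 1 else 0

/-- The incidence matrix identifying the line of points agreeing with `x` in the `i`-th coordinate
with `G`. The points of that line are labelled by the next relative coordinate; for elementary
abelian `2`-groups the third one is the same, see `lineInc_apply`. -/
def lineInc (i : Fin 3) : Matrix G (XG G) F :=
  of fun g y => if relCoord x y i = 1 ∧ relCoord x y (i + 1) = g then 1 else 0

variable {x}

theorem coordInc_apply (i : Fin 3) (g : G) (y : XG G) :
    coordInc F x i g y = if relCoord x y i = g then 1 else 0 := rfl

theorem lineInc_apply (helem : ∀ a : G, a ^ 2 = 1) {i j : Fin 3} (hij : i ≠ j) (g : G) (y : XG G) :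
    lineInc F x i g y = if relCoord x y i = 1 ∧ relCoord x y j = g then 1 else 0 := by
  have hi : i + 1 ≠ i := by decide +revert
  refine if_congr (and_congr_right fun h => ?_) rfl rfl
  rw [relCoord_eq_of_relCoord_eq_one helem hi hij.symm h]

variable [Fintype G]

theorem lineInc_eq_coordInc_mul (helem : ∀ a : G, a ^ 2 = 1) {i j : Fin 3} (hij : i ≠ j) :
    lineInc F x i = coordInc F x j * diagonal (lineInd F x i) := by
  ext g y
  rw [lineInc_apply F helem hij, mul_diagonal, coordInc_apply, lineInd, ite_zero_mul_ite_zero,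
    mul_one]
  simp only [and_comm]

theorem coordInc_mul_transpose_self (i : Fin 3) :
    coordInc F x i * (coordInc F x i)ᵀ = (Fintype.card G : F) • 1 := by
  obtain ⟨j, hij⟩ := exists_ne i
  ext g h
  simp only [mul_apply, transpose_apply, coordInc_apply]
  refine (sum_relCoord_pair x hij.symm fun a _ =>
    (if a = g then (1 : F) else 0) * if a = h then 1 else 0).trans ?_
  simp [one_apply, eq_comm]

theorem coordInc_mul_transpose {i j : Fin 3} (hij : i ≠ j) :
    coordInc F x i * (coordInc F x j)ᵀ = vecMulVec 1 1 := by
  ext g h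
  simp only [mul_apply, transpose_apply, coordInc_apply]
  refine (sum_relCoord_pair x hij fun a b =>
    (if a = g then (1 : F) else 0) * if b = h then 1 else 0).trans ?_
  simp [vecMulVec_apply]

theorem lineInc_mul_transpose_self (helem : ∀ a : G, a ^ 2 = 1) (i : Fin 3) :
    lineInc F x i * (lineInc F x i)ᵀ = 1 := by
  obtain ⟨j, hij⟩ := exists_ne i
  ext g h
  simp only [mul_apply, transpose_apply, lineInc_apply F helem hij.symm]
  refine (sum_relCoord_pair x hij.symm fun a b =>
    (if a = 1 ∧ b = g then (1 : F) else 0) * if a = 1 ∧ b = h then 1 else 0).trans ?_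
  simp [one_apply, ite_and, eq_comm]

theorem lineInc_mul_transpose (helem : ∀ a : G, a ^ 2 = 1) {i j : Fin 3} (hij : i ≠ j) :
    lineInc F x i * (lineInc F x j)ᵀ = vecMulVec (Pi.single 1 1) (Pi.single 1 1) := by
  ext g h
  simp only [mul_apply, transpose_apply, lineInc_apply F helem hij, lineInc_apply F helem hij.symm]
  refine (sum_relCoord_pair x hij fun a b =>
    (if a = 1 ∧ b = g then (1 : F) else 0) * if b = 1 ∧ a = h then 1 else 0).trans ?_
  simp [vecMulVec_apply, ite_and, Pi.single_apply, eq_comm]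

theorem lineInc_mul_coordInc_transpose_self (i : Fin 3) :
    lineInc F x i * (coordInc F x i)ᵀ = vecMulVec 1 (Pi.single 1 1) := by
  have hi : i ≠ i + 1 := by decide +revert
  ext g h
  simp only [mul_apply, transpose_apply, lineInc, of_apply, coordInc_apply]
  refine (sum_relCoord_pair x hi fun a b =>
    (if a = 1 ∧ b = g then (1 : F) else 0) * if a = h then 1 else 0).trans ?_
  simp [vecMulVec_apply, ite_and, Pi.single_apply, eq_comm]

theorem lineInc_mul_coordInc_transpose (helem : ∀ a : G, a ^ 2 = 1) {i j : Fin 3} (hij : i ≠ j) :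
    lineInc F x i * (coordInc F x j)ᵀ = 1 := by
  ext g h
  simp only [mul_apply, transpose_apply, lineInc_apply F helem hij, coordInc_apply]
  refine (sum_relCoord_pair x hij fun a b =>
    (if a = 1 ∧ b = g then (1 : F) else 0) * if b = h then 1 else 0).trans ?_
  simp [one_apply, ite_and, eq_comm]

theorem coordInc_mul_lineInc_transpose_self (i : Fin 3) :
    coordInc F x i * (lineInc F x i)ᵀ = vecMulVec (Pi.single 1 1) 1 := by
  simpa [-one_vecMulVec, -vecMulVec_one] using
    congrArg transpose (lineInc_mul_coordInc_transpose_self F (x := x) i)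

theorem coordInc_mul_lineInc_transpose (helem : ∀ a : G, a ^ 2 = 1) {i j : Fin 3} (hij : i ≠ j) :
    coordInc F x i * (lineInc F x j)ᵀ = 1 := by
  simpa using congrArg transpose (lineInc_mul_coordInc_transpose F (x := x) helem hij.symm)

theorem coordInc_transpose_mul (i : Fin 3) :
    (coordInc F x i)ᵀ * coordInc F x i = Adj F 0 + Adj F (lineRel i) := by
  ext y z
  rw [Matrix.add_apply, Adj_zero_add_Adj_lineRel_apply]
  simp [mul_apply, coordInc_apply, relCoord_inj, eq_comm]

theorem lineInc_transpose_mul (helem : ∀ a : G, a ^ 2 = 1) (i : Fin 3) :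
    (lineInc F x i)ᵀ * lineInc F x i = diagonal (lineInd F x i) := by
  obtain ⟨j, hij⟩ := exists_ne i
  ext y z
  have hyz : y = z ∧ relCoord x y i = 1 ↔
      relCoord x z i = 1 ∧ relCoord x y i = 1 ∧ relCoord x y j = relCoord x z j := by
    refine ⟨fun ⟨h, hy⟩ => by simp [← h, hy], fun ⟨hz, hy, h⟩ => ⟨?_, hy⟩⟩
    exact XG_eq_of_coord_eq hij (relCoord_inj.mp h) (relCoord_inj.mp (hy.trans hz.symm))
  simp only [diagonal_apply, lineInd, ← ite_and, hyz]
  simp [mul_apply, lineInc_apply F helem hij.symm, ite_and]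

theorem coordInc_transpose_mulVec_single (i : Fin 3) :
    (coordInc F x i)ᵀ *ᵥ Pi.single 1 1 = lineInd F x i := by
  ext y
  simp [coordInc_apply, lineInd]

theorem coordInc_transpose_mulVec_one (i : Fin 3) : (coordInc F x i)ᵀ *ᵥ 1 = 1 := by
  ext y
  simp [mulVec, dotProduct, coordInc_apply]

theorem lineInc_transpose_mulVec_single (i : Fin 3) :
    (lineInc F x i)ᵀ *ᵥ Pi.single 1 1 = sphere F x 0 := by
  have hi : i ≠ i + 1 := by decide +revert
  ext y
  have hxy : (relCoord x y i = 1 ∧ relCoord x y (i + 1) = 1) ↔ y = x := by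
    rw [relCoord_eq_one, relCoord_eq_one]
    exact ⟨fun h => XG_eq_of_coord_eq hi h.1.symm h.2.symm, by rintro rfl; exact ⟨rfl, rfl⟩⟩
  simp [lineInc, hxy, sphere_zero, Pi.single_apply]

theorem lineInc_transpose_mulVec_one (i : Fin 3) : (lineInc F x i)ᵀ *ᵥ 1 = lineInd F x i := by
  ext y
  simp [mulVec, dotProduct, lineInc, lineInd, ite_and]

end Incidence

section PerpProj

variable (F : Type*) [Field F] {ι : Type*} [Fintype ι] [DecidableEq ι] (o : ι)

/-- The projection of `F ^ ι` onto the orthogonal complement of the plane spanned by the basis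
vector at `o` and the all-one vector. -/
def perpProj : Matrix ι ι F :=
  1 - vecMulVec (Pi.single o 1) (Pi.single o 1) -
    ((Fintype.card ι : F) - 1)⁻¹ • vecMulVec (1 - Pi.single o 1) (1 - Pi.single o 1)

theorem perpProj_transpose : (perpProj F o)ᵀ = perpProj F o := by
  simp [perpProj]

theorem perpProj_mulVec_single : perpProj F o *ᵥ Pi.single o 1 = 0 := by
  have h : (1 - Pi.single o 1 : ι → F) ⬝ᵥ Pi.single o 1 = 0 := by simp
  rw [perpProj, sub_mulVec, sub_mulVec, smul_mulVec, vecMulVec_mulVec, vecMulVec_mulVec, h,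
    one_mulVec]
  simp

variable {F} in
theorem perpProj_mulVec_one (hn : (Fintype.card ι : F) ≠ 1) : perpProj F o *ᵥ 1 = 0 := by
  have h : (1 - Pi.single o 1 : ι → F) ⬝ᵥ 1 = Fintype.card ι - 1 := by simp [sub_dotProduct]
  rw [perpProj, sub_mulVec, sub_mulVec, smul_mulVec, vecMulVec_mulVec, vecMulVec_mulVec, h,
    op_smul_eq_smul, op_smul_eq_smul, inv_smul_smul₀ (sub_ne_zero.mpr hn)]
  simp

variable {F} in
theorem perpProj_mul_self (hn : (Fintype.card ι : F) ≠ 1) :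
    perpProj F o * perpProj F o = perpProj F o := by
  nth_rw 2 [perpProj]
  simp only [mul_sub, mul_one, Matrix.mul_smul, mul_vecMulVec, mulVec_sub,
    perpProj_mulVec_single, perpProj_mulVec_one o hn, sub_self, zero_vecMulVec, smul_zero, sub_zero]

variable {F} in
theorem perpProj_ne_zero (hcard : 3 ≤ Fintype.card ι) (hn : (Fintype.card ι : F) ≠ 1) :
    perpProj F o ≠ 0 := by
  obtain ⟨i, hi, j, hj, hij⟩ := Finset.one_lt_card.mp
    (show 1 < (Finset.univ.erase o).card by
      rw [Finset.card_erase_of_mem (Finset.mem_univ o), Finset.card_univ]; omega)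
  have hentry : perpProj F o i j = -((Fintype.card ι : F) - 1)⁻¹ := by
    simp [perpProj, vecMulVec_apply, one_apply, hij, Finset.ne_of_mem_erase hi,
      Finset.ne_of_mem_erase hj]
  intro h
  rw [h, Matrix.zero_apply, eq_comm, neg_eq_zero, inv_eq_zero] at hentry
  exact hn (sub_eq_zero.mp hentry)

end PerpProj

section IncidenceGram

variable {F : Type*} [CommRing F]

/-- The matrix `Γ` such that `perpProj * inc u * (inc v)ᵀ = Γ u v • perpProj` for the six incidence
matrices `inc u` and a group of order `n`; see `perpProj_mul_incidence_mul_transpose`. -/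
def incidenceGram (n : F) : Matrix (Fin 3 ⊕ Fin 3) (Fin 3 ⊕ Fin 3) F :=
  fromBlocks 1 (vecMulVec 1 1 - 1) (vecMulVec 1 1 - 1) (n • 1)

theorem det_incidenceGram (n : F) : (incidenceGram n).det = (n - 1) ^ 2 * (n - 4) := by
  rw [incidenceGram, det_fromBlocks_one₁₁, det_fin_three]
  simp only [Matrix.sub_apply, Matrix.smul_apply, one_apply, mul_apply, vecMulVec_apply,
    Pi.one_apply, Fin.sum_univ_three, smul_eq_mul, Fin.reduceEq, Fin.isValue, if_true, if_false]
  ring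

end IncidenceGram

section BlockUnit

variable (F : Type) [Field F] {G : Type} [Group G] [DecidableEq G] (x : XG G)

/-- The six incidence matrices `lineInc` and `coordInc`. -/
def incidence : Fin 3 ⊕ Fin 3 → Matrix G (XG G) F :=
  Sum.elim (lineInc F x) (coordInc F x)

variable [Fintype G]

/-- The Munn basis of the component `M₆(F)`, which acts on the six copies of the image of
`perpProj` embedded in `F ^ X_G` by the transposed incidence matrices. -/
def blockUnit (u v : Fin 3 ⊕ Fin 3) : Matrix (XG G) (XG G) F :=
  (incidence F x u)ᵀ * perpProj F (1 : G) * incidence F x v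

variable {F x}

theorem perpProj_mul_incidence_mul_transpose (helem : ∀ a : G, a ^ 2 = 1)
    (hn : (Fintype.card G : F) ≠ 1) (u v : Fin 3 ⊕ Fin 3) :
    perpProj F (1 : G) * (incidence F x u * (incidence F x v)ᵀ) =
      incidenceGram (Fintype.card G : F) u v • perpProj F (1 : G) := by
  have hone (w : G → F) : perpProj F (1 : G) * vecMulVec 1 w = 0 := by
    rw [mul_vecMulVec, perpProj_mulVec_one 1 hn, zero_vecMulVec]
  have hsingle (w : G → F) : perpProj F (1 : G) * vecMulVec (Pi.single 1 1) w = 0 := by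
    rw [mul_vecMulVec, perpProj_mulVec_single, zero_vecMulVec]
  obtain i | i := u <;> obtain j | j := v <;> obtain rfl | hij := eq_or_ne i j <;>
    simp [incidence, incidenceGram, -vecMulVec_one, -one_vecMulVec, vecMulVec_apply,
      lineInc_mul_transpose_self, lineInc_mul_transpose, lineInc_mul_coordInc_transpose_self,
      lineInc_mul_coordInc_transpose, coordInc_mul_lineInc_transpose_self,
      coordInc_mul_lineInc_transpose, coordInc_mul_transpose_self, coordInc_mul_transpose, *]

theorem isMunnFamily_blockUnit (helem : ∀ a : G, a ^ 2 = 1) (hn : (Fintype.card G : F) ≠ 1) :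
    IsMunnFamily (incidenceGram (Fintype.card G : F)) (blockUnit F x) := fun u v w z =>
  calc blockUnit F x u v * blockUnit F x w z
      = (incidence F x u)ᵀ * (perpProj F (1 : G) * (incidence F x v * (incidence F x w)ᵀ)) *
          perpProj F (1 : G) * incidence F x z := by
        simp only [blockUnit, Matrix.mul_assoc]
    _ = incidenceGram (Fintype.card G : F) v w •
          ((incidence F x u)ᵀ * (perpProj F (1 : G) * perpProj F (1 : G)) * incidence F x z) := by
        rw [perpProj_mul_incidence_mul_transpose helem hn]
        simp only [Matrix.mul_smul, Matrix.smul_mul, Matrix.mul_assoc]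
    _ = incidenceGram (Fintype.card G : F) v w • blockUnit F x u z := by
        rw [perpProj_mul_self 1 hn, blockUnit]

theorem blockUnit_inl_ne_zero (helem : ∀ a : G, a ^ 2 = 1) (hcard : 3 ≤ Fintype.card G)
    (hn : (Fintype.card G : F) ≠ 1) (i : Fin 3) : blockUnit F x (.inl i) (.inl i) ≠ 0 := by
  intro h
  have hline := lineInc_mul_transpose_self F (x := x) helem i
  apply perpProj_ne_zero (1 : G) hcard hn
  calc perpProj F (1 : G)
      = (lineInc F x i * (lineInc F x i)ᵀ) * perpProj F (1 : G) *
          (lineInc F x i * (lineInc F x i)ᵀ) := by simp [hline]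
    _ = lineInc F x i * blockUnit F x (.inl i) (.inl i) * (lineInc F x i)ᵀ := by
        simp only [blockUnit, incidence, Sum.elim_inl, Matrix.mul_assoc]
    _ = 0 := by simp [h]

theorem blockUnit_transpose (u v : Fin 3 ⊕ Fin 3) :
    (blockUnit F x u v)ᵀ = blockUnit F x v u := by
  simp [blockUnit, perpProj_transpose, Matrix.mul_assoc]

end BlockUnit

section PrimaryModule

/-- The sizes of the relation classes `R_a(x)` for a group of order `n`. -/
def valency {F : Type*} [Ring F] (n : F) : Fin 5 → F :=
  ![1, n - 1, n - 1, n - 1, (n - 1) * (n - 2)]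

theorem det_diagonal_valency {F : Type*} [CommRing F] (n : F) :
    (diagonal (valency n)).det = (n - 1) ^ 4 * (n - 2) := by
  rw [det_diagonal, Fin.prod_univ_five]
  change 1 * (n - 1) * (n - 1) * (n - 1) * ((n - 1) * (n - 2)) = _
  ring

variable (F : Type) [Field F] {G : Type} [Group G] [DecidableEq G] (x : XG G)

/-- The multiples of the matrix units of the component `M₅(F)`, which acts on the primary module
spanned by the spheres around `x`. -/
def primaryUnit (a b : Fin 5) : Matrix (XG G) (XG G) F :=
  vecMulVec (sphere F x a) (sphere F x b)

variable {F x}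

theorem primaryUnit_zero_ne_zero : primaryUnit F x 0 0 ≠ 0 := by
  simp [primaryUnit, sphere_zero, Pi.single_eq_zero_iff]

theorem DualE_zero : DualE F x 0 = primaryUnit F x 0 0 := by
  rw [DualE_eq_diagonal, primaryUnit, sphere_zero, diagonal_single,
    single_eq_single_vecMulVec_single]

theorem sum_primaryUnit : ∑ a, ∑ b, primaryUnit F x a b = vecMulVec 1 1 := by
  ext y z
  simp only [primaryUnit, Matrix.sum_apply, vecMulVec_apply, ← Finset.mul_sum, ← Finset.sum_mul]
  rw [← Finset.sum_apply y, ← Finset.sum_apply z, sum_sphere]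

theorem primaryUnit_transpose (a b : Fin 5) : (primaryUnit F x a b)ᵀ = primaryUnit F x b a :=
  transpose_vecMulVec _ _

variable [Fintype G]

theorem lineInd_dotProduct_one (i : Fin 3) : lineInd F x i ⬝ᵥ 1 = Fintype.card G := by
  obtain ⟨j, hij⟩ := exists_ne i
  simp only [dotProduct, lineInd, Pi.one_apply]
  refine (sum_relCoord_pair x hij.symm fun a _ => (if a = 1 then (1 : F) else 0) * 1).trans ?_
  simp

theorem sphere_dotProduct_one (a : Fin 5) :
    sphere F x a ⬝ᵥ 1 = valency (Fintype.card G : F) a := by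
  have h₀ : sphere F x 0 ⬝ᵥ 1 = 1 := by simp [sphere_zero]
  have hline (i : Fin 3) : sphere F x (lineRel i) ⬝ᵥ 1 = (Fintype.card G : F) - 1 := by
    rw [eq_sub_iff_add_eq', ← h₀, ← add_dotProduct, sphere_zero_add_sphere_lineRel,
      lineInd_dotProduct_one]
  have hsum : ∑ a, sphere F x a ⬝ᵥ 1 = (Fintype.card G : F) ^ 2 := by
    rw [← sum_dotProduct, sum_sphere, one_dotProduct_one, card_XG, Nat.cast_pow]
  revert a
  refine forall_rel_index.mpr ⟨h₀, fun i => (hline i).trans (by fin_cases i <;> rfl), ?_⟩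
  rw [sum_rel_index, h₀, Fintype.sum_congr _ _ hline, Fin.sum_const, nsmul_eq_mul] at hsum
  have hfour : valency (Fintype.card G : F) 4 = (Fintype.card G - 1) * (Fintype.card G - 2) := rfl
  push_cast at hsum
  linear_combination hsum - hfour

theorem sphere_dotProduct_sphere (a b : Fin 5) :
    sphere F x a ⬝ᵥ sphere F x b = diagonal (valency (Fintype.card G : F)) a b := by
  obtain rfl | hab := eq_or_ne a b
  · rw [diagonal_apply_eq, ← sphere_dotProduct_one (x := x)]
    exact Finset.sum_congr rfl fun y _ =>
      (congrFun (sphere_mul_sphere_self F x a) y).trans (mul_one _).symm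
  · rw [diagonal_apply_ne _ hab]
    exact Finset.sum_eq_zero fun y _ => congrFun (sphere_mul_sphere F x hab) y

theorem isMunnFamily_primaryUnit :
    IsMunnFamily (diagonal (valency (Fintype.card G : F))) (primaryUnit F x) := fun a b c d => by
  rw [primaryUnit, primaryUnit, vecMulVec_mul_vecMulVec, sphere_dotProduct_sphere, vecMulVec_smul]
  rfl

theorem sphere_mem {N : Submodule F (XG G → F)}
    (hsingle : ∀ u, (incidence F x u)ᵀ *ᵥ Pi.single 1 1 ∈ N)
    (hone : ∀ u, (incidence F x u)ᵀ *ᵥ 1 ∈ N) (a : Fin 5) : sphere F x a ∈ N := by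
  refine mem_of_lineRel_mem ?_ (fun i => ?_) ?_ a
  · rw [← lineInc_transpose_mulVec_single F 0]
    exact hsingle (.inl 0)
  · rw [sphere_zero_add_sphere_lineRel, ← lineInc_transpose_mulVec_one]
    exact hone (.inl i)
  · rw [sum_sphere, ← coordInc_transpose_mulVec_one F 0]
    exact hone (.inr 0)

theorem incidence_transpose_mulVec_single_mem_span_sphere (u : Fin 3 ⊕ Fin 3) :
    (incidence F x u)ᵀ *ᵥ Pi.single 1 1 ∈ Submodule.span F (Set.range (sphere F x)) := by
  have hsphere (a : Fin 5) : sphere F x a ∈ Submodule.span F (Set.range (sphere F x)) :=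
    Submodule.subset_span (Set.mem_range_self a)
  obtain i | i := u
  · rw [incidence, Sum.elim_inl, lineInc_transpose_mulVec_single]
    exact hsphere 0
  · rw [incidence, Sum.elim_inr, coordInc_transpose_mulVec_single,
      ← sphere_zero_add_sphere_lineRel]
    exact add_mem (hsphere 0) (hsphere _)

theorem incidence_transpose_mulVec_one_mem_span_sphere (u : Fin 3 ⊕ Fin 3) :
    (incidence F x u)ᵀ *ᵥ 1 ∈ Submodule.span F (Set.range (sphere F x)) := by
  have hsphere (a : Fin 5) : sphere F x a ∈ Submodule.span F (Set.range (sphere F x)) :=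
    Submodule.subset_span (Set.mem_range_self a)
  obtain i | i := u
  · rw [incidence, Sum.elim_inl, lineInc_transpose_mulVec_one, ← sphere_zero_add_sphere_lineRel]
    exact add_mem (hsphere 0) (hsphere _)
  · rw [incidence, Sum.elim_inr, coordInc_transpose_mulVec_one, ← sum_sphere F x]
    exact sum_mem fun a _ => hsphere a

theorem blockUnit_mulVec_sphere (helem : ∀ a : G, a ^ 2 = 1) (hn : (Fintype.card G : F) ≠ 1)
    (u v : Fin 3 ⊕ Fin 3) (a : Fin 5) : blockUnit F x u v *ᵥ sphere F x a = 0 := by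
  have hkill {w : G → F} (hw : perpProj F (1 : G) *ᵥ w = 0) (s : Fin 3 ⊕ Fin 3) :
      blockUnit F x u v *ᵥ (incidence F x s)ᵀ *ᵥ w = 0 := by
    rw [blockUnit, mulVec_mulVec, Matrix.mul_assoc, Matrix.mul_assoc,
      perpProj_mul_incidence_mul_transpose helem hn, ← mulVec_mulVec, smul_mulVec, hw,
      smul_zero, mulVec_zero]
  exact sphere_mem (N := LinearMap.ker (blockUnit F x u v).mulVecLin)
    (hkill (perpProj_mulVec_single F 1)) (hkill (perpProj_mulVec_one 1 hn)) a

theorem blockUnit_mul_primaryUnit (helem : ∀ a : G, a ^ 2 = 1) (hn : (Fintype.card G : F) ≠ 1)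
    (u v : Fin 3 ⊕ Fin 3) (a b : Fin 5) : blockUnit F x u v * primaryUnit F x a b = 0 := by
  rw [primaryUnit, mul_vecMulVec, blockUnit_mulVec_sphere helem hn, zero_vecMulVec]

theorem primaryUnit_mul_blockUnit (helem : ∀ a : G, a ^ 2 = 1) (hn : (Fintype.card G : F) ≠ 1)
    (a b : Fin 5) (u v : Fin 3 ⊕ Fin 3) : primaryUnit F x a b * blockUnit F x u v = 0 := by
  rw [← transpose_inj, transpose_mul, blockUnit_transpose, primaryUnit_transpose,
    blockUnit_mul_primaryUnit helem hn, transpose_zero]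

end PrimaryModule

section Kernel

variable (F : Type) [Field F] {G : Type} [Group G] [Fintype G] [DecidableEq G]

theorem exists_ne_zero_forall_incidence_mulVec_eq_zero (x : XG G) (hcard : 6 < Fintype.card G) :
    ∃ v ≠ 0, ∀ u, incidence F x u *ᵥ v = 0 := by
  let φ : (XG G → F) →ₗ[F] (Fin 3 ⊕ Fin 3 → G → F) :=
    LinearMap.pi fun u => (incidence F x u).mulVecLin
  have hfinrank : Module.finrank F (Fin 3 ⊕ Fin 3 → G → F) < Module.finrank F (XG G → F) := by
    rw [Module.finrank_pi_fintype]
    simp only [Module.finrank_fintype_fun_eq_card, card_XG, Finset.sum_const, Finset.card_univ,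
      Fintype.card_sum, Fintype.card_fin, smul_eq_mul]
    nlinarith
  obtain ⟨v, hv, hv₀⟩ := Submodule.exists_mem_ne_zero_of_ne_bot
    (LinearMap.ker_ne_bot_of_finrank_lt (f := φ) hfinrank)
  exact ⟨v, hv₀, congrFun hv⟩

variable {F}

theorem blockUnit_mul_vecMulVec {x : XG G} {v : XG G → F} (hv : ∀ u, incidence F x u *ᵥ v = 0)
    (w : XG G → F) (s t : Fin 3 ⊕ Fin 3) : blockUnit F x s t * vecMulVec v w = 0 := by
  rw [mul_vecMulVec, blockUnit, ← mulVec_mulVec, hv, mulVec_zero, zero_vecMulVec]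

theorem primaryUnit_mul_vecMulVec {x : XG G} {v : XG G → F} (hv : ∀ u, incidence F x u *ᵥ v = 0)
    (w : XG G → F) (a b : Fin 5) : primaryUnit F x a b * vecMulVec v w = 0 := by
  have hdot (y : G → F) (u : Fin 3 ⊕ Fin 3) : v ⬝ᵥ (incidence F x u)ᵀ *ᵥ y = 0 := by
    rw [dotProduct_mulVec, vecMul_transpose, hv, zero_dotProduct]
  have hb : v ⬝ᵥ sphere F x b = 0 :=
    sphere_mem (N := LinearMap.ker (dotProductBilin F F v)) (hdot _) (hdot _) b
  rw [primaryUnit, vecMulVec_mul_vecMulVec, dotProduct_comm, hb, zero_smul, vecMulVec_zero]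

end Kernel

theorem six_lt_card_of_sq_eq_one {G : Type*} [Group G] [Fintype G] (helem : ∀ a : G, a ^ 2 = 1)
    (hcard : 3 ≤ Fintype.card G) (hcard' : Fintype.card G ≠ 4) : 6 < Fintype.card G := by
  have hpgroup : IsPGroup 2 G := fun g => ⟨1, by rw [pow_one, helem]⟩
  obtain ⟨k, hk⟩ := IsPGroup.iff_card.mp hpgroup
  rw [Nat.card_eq_fintype_card] at hk
  have hk3 : 3 ≤ k := by
    by_contra! h
    interval_cases k <;> omega
  have := Nat.pow_le_pow_right (by norm_num : 0 < 2) hk3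
  omega

section Generation

theorem vecMulVec_mem_of_mem_span {K m n ι κ : Type*} [CommSemiring K] {v : ι → m → K}
    {w : κ → n → K} {N : Submodule K (Matrix m n K)} (h : ∀ i j, vecMulVec (v i) (w j) ∈ N)
    {a : m → K} {b : n → K} (ha : a ∈ Submodule.span K (Set.range v))
    (hb : b ∈ Submodule.span K (Set.range w)) : vecMulVec a b ∈ N := by
  have hle : Submodule.map₂ (vecMulVecBilin K K) (Submodule.span K (Set.range v))
      (Submodule.span K (Set.range w)) ≤ N := by
    rw [Submodule.map₂_span_span, Submodule.span_le]
    rintro _ ⟨_, ⟨i, rfl⟩, _, ⟨j, rfl⟩, rfl⟩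
    exact h i j
  exact hle (Submodule.apply_mem_map₂ _ ha hb)

variable {F : Type} [Field F] {G : Type} [Group G] [Fintype G] [DecidableEq G] {x : XG G}

theorem blockUnit_eq_sub (u v : Fin 3 ⊕ Fin 3) :
    blockUnit F x u v = (incidence F x u)ᵀ * incidence F x v -
      vecMulVec ((incidence F x u)ᵀ *ᵥ Pi.single 1 1) ((incidence F x v)ᵀ *ᵥ Pi.single 1 1) -
      ((Fintype.card G : F) - 1)⁻¹ • vecMulVec ((incidence F x u)ᵀ *ᵥ (1 - Pi.single 1 1))
        ((incidence F x v)ᵀ *ᵥ (1 - Pi.single 1 1)) := by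
  simp only [blockUnit, perpProj, Matrix.mul_sub, Matrix.sub_mul, Matrix.mul_one, Matrix.mul_smul,
    Matrix.smul_mul, mul_vecMulVec, vecMulVec_mul, mulVec_transpose]

theorem blockUnit_mem_iff {R : Subalgebra F (Matrix (XG G) (XG G) F)}
    (hR : ∀ a b, primaryUnit F x a b ∈ R) (u v : Fin 3 ⊕ Fin 3) :
    blockUnit F x u v ∈ R ↔ (incidence F x u)ᵀ * incidence F x v ∈ R := by
  have hperp (s : Fin 3 ⊕ Fin 3) : (incidence F x s)ᵀ *ᵥ (1 - Pi.single 1 1) ∈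
      Submodule.span F (Set.range (sphere F x)) := by
    rw [mulVec_sub]
    exact sub_mem (incidence_transpose_mulVec_one_mem_span_sphere s)
      (incidence_transpose_mulVec_single_mem_span_sphere s)
  have hspan {w w' : XG G → F} (hw : w ∈ Submodule.span F (Set.range (sphere F x)))
      (hw' : w' ∈ Submodule.span F (Set.range (sphere F x))) : vecMulVec w w' ∈ R :=
    vecMulVec_mem_of_mem_span (N := Subalgebra.toSubmodule R) hR hw hw'
  rw [blockUnit_eq_sub, sub_sub]
  exact (Subalgebra.toSubmodule R).sub_mem_iff_left <| add_mem
    (hspan (incidence_transpose_mulVec_single_mem_span_sphere u)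
      (incidence_transpose_mulVec_single_mem_span_sphere v))
    (Subalgebra.smul_mem _ (hspan (hperp u) (hperp v)) _)

theorem DualE_mul_DualE_self (a : Fin 5) : DualE F x a * DualE F x a = DualE F x a := by
  rw [DualE_eq_diagonal, diagonal_mul_diagonal', ← Pi.mul_def, sphere_mul_sphere_self]

theorem DualE_mem_terwilligerAlg (a : Fin 5) : DualE F x a ∈ TerwilligerAlg F G x :=
  Algebra.subset_adjoin ⟨a, 0, a, by rw [Adj_zero, Matrix.mul_one, DualE_mul_DualE_self]⟩

theorem Adj_mem_terwilligerAlg (b : Fin 5) : Adj F b ∈ TerwilligerAlg F G x := by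
  have h : Adj F b = ∑ a, ∑ c, DualE F x a * Adj F b * DualE F x c := by
    simp only [← Finset.mul_sum, ← Finset.sum_mul, sum_DualE, Matrix.one_mul, Matrix.mul_one]
  rw [h]
  exact sum_mem fun a _ => sum_mem fun c _ => Algebra.subset_adjoin ⟨a, b, c, rfl⟩

theorem primaryUnit_mem_terwilligerAlg (a b : Fin 5) :
    primaryUnit F x a b ∈ TerwilligerAlg F G x := by
  have h : primaryUnit F x a b = DualE F x a * (∑ c, Adj F c) * DualE F x b := by
    rw [sum_Adj, mul_vecMulVec, vecMulVec_mul, DualE_eq_diagonal, DualE_eq_diagonal, primaryUnit]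
    congr 1 <;> ext y <;> simp [mulVec_diagonal, vecMul_diagonal]
  rw [h]
  exact mul_mem (mul_mem (DualE_mem_terwilligerAlg a)
    (sum_mem fun c _ => Adj_mem_terwilligerAlg c)) (DualE_mem_terwilligerAlg b)

theorem incidence_transpose_mul_incidence_mem_terwilligerAlg (helem : ∀ a : G, a ^ 2 = 1)
    (u v : Fin 3 ⊕ Fin 3) :
    (incidence F x u)ᵀ * incidence F x v ∈ TerwilligerAlg F G x := by
  have hcoord (i : Fin 3) : (coordInc F x i)ᵀ * coordInc F x i ∈ TerwilligerAlg F G x := by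
    rw [coordInc_transpose_mul]
    exact add_mem (Adj_mem_terwilligerAlg 0) (Adj_mem_terwilligerAlg _)
  have hline (i : Fin 3) : diagonal (lineInd F x i) ∈ TerwilligerAlg F G x := by
    rw [← DualE_zero_add_DualE_lineRel]
    exact add_mem (DualE_mem_terwilligerAlg 0) (DualE_mem_terwilligerAlg _)
  have hcoordLine {i j : Fin 3} (hij : i ≠ j) :
      (coordInc F x i)ᵀ * lineInc F x j ∈ TerwilligerAlg F G x := by
    rw [lineInc_eq_coordInc_mul F helem hij.symm, ← Matrix.mul_assoc]
    exact mul_mem (hcoord i) (hline j)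
  have hlineCoord {i j : Fin 3} (hij : i ≠ j) :
      (lineInc F x i)ᵀ * coordInc F x j ∈ TerwilligerAlg F G x := by
    rw [lineInc_eq_coordInc_mul F helem hij, transpose_mul, diagonal_transpose, Matrix.mul_assoc]
    exact mul_mem (hline i) (hcoord j)
  have hlineLine (i j : Fin 3) : (lineInc F x i)ᵀ * lineInc F x j ∈ TerwilligerAlg F G x := by
    obtain ⟨k, hik, hjk⟩ : ∃ k, i ≠ k ∧ j ≠ k := by decide +revert
    rw [lineInc_eq_coordInc_mul F helem hjk, ← Matrix.mul_assoc]
    exact mul_mem (hlineCoord hik) (hline j)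
  have hthrough {k : Fin 3} {A B : Matrix G (XG G) F}
      (hA : Aᵀ * lineInc F x k ∈ TerwilligerAlg F G x)
      (hB : (lineInc F x k)ᵀ * B ∈ TerwilligerAlg F G x) : Aᵀ * B ∈ TerwilligerAlg F G x := by
    have h := mul_mem hA hB
    rwa [Matrix.mul_assoc, ← Matrix.mul_assoc (lineInc F x k), lineInc_mul_transpose_self F helem,
      Matrix.one_mul] at h
  obtain i | i := u <;> obtain j | j := v
  · exact hlineLine i j
  · obtain ⟨k, hk⟩ := exists_ne j
    exact hthrough (hlineLine i k) (hlineCoord hk)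
  · obtain ⟨k, hk⟩ := exists_ne i
    exact hthrough (hcoordLine hk.symm) (hlineLine k j)
  · obtain ⟨k, hik, hjk⟩ : ∃ k, i ≠ k ∧ j ≠ k := by decide +revert
    exact hthrough (hcoordLine hik) (hlineCoord hjk.symm)

theorem terwilligerAlg_le (helem : ∀ a : G, a ^ 2 = 1)
    {R : Subalgebra F (Matrix (XG G) (XG G) F)} (hprimary : ∀ a b, primaryUnit F x a b ∈ R)
    (hinc : ∀ u, (incidence F x u)ᵀ * incidence F x u ∈ R) : TerwilligerAlg F G x ≤ R := by
  have hDualE : ∀ a, DualE F x a ∈ R := by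
    refine mem_of_lineRel_mem ?_ (fun i => ?_) ?_
    · rw [DualE_zero]
      exact hprimary 0 0
    · rw [DualE_zero_add_DualE_lineRel, ← lineInc_transpose_mul F helem]
      exact hinc (.inl i)
    · rw [sum_DualE]
      exact one_mem R
  have hAdj : ∀ a, Adj F a ∈ R := by
    refine mem_of_lineRel_mem ?_ (fun i => ?_) ?_
    · rw [Adj_zero]
      exact one_mem R
    · rw [← coordInc_transpose_mul F (x := x)]
      exact hinc (.inr i)
    · rw [sum_Adj, ← sum_primaryUnit (x := x)]
      exact sum_mem fun a _ => sum_mem fun b _ => hprimary a b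
  refine Algebra.adjoin_le ?_
  rintro _ ⟨a, b, c, rfl⟩
  exact mul_mem (mul_mem (hDualE a) (hAdj b)) (hDualE c)

theorem terwilligerAlg_eq_adjoin (helem : ∀ a : G, a ^ 2 = 1) :
    TerwilligerAlg F G x =
      Algebra.adjoin F (Set.range (Function.uncurry (blockUnit F x))) ⊔
        Algebra.adjoin F (Set.range (Function.uncurry (primaryUnit F x))) := by
  apply le_antisymm
  · have hprimary (a b : Fin 5) := Algebra.mem_sup_right
      (S := Algebra.adjoin F (Set.range (Function.uncurry (blockUnit F x)))) <|
      Algebra.subset_adjoin (R := F) (s := Set.range (Function.uncurry (primaryUnit F x)))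
        (Set.mem_range_self (a, b))
    exact terwilligerAlg_le helem hprimary fun u => (blockUnit_mem_iff hprimary u u).mp <|
      Algebra.mem_sup_left (Algebra.subset_adjoin (Set.mem_range_self (u, u)))
  · refine sup_le (Algebra.adjoin_le ?_) (Algebra.adjoin_le ?_)
    · rintro _ ⟨⟨u, v⟩, rfl⟩
      exact (blockUnit_mem_iff primaryUnit_mem_terwilligerAlg u v).mpr
        (incidence_transpose_mul_incidence_mem_terwilligerAlg helem u v)
    · rintro _ ⟨⟨a, b⟩, rfl⟩
      exact primaryUnit_mem_terwilligerAlg a b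

end Generation

theorem stmt19 (F : Type) [Field F] (G : Type) [Group G] [Fintype G] [DecidableEq G]
    (helem : ∀ a : G, a ^ 2 = 1) (hcard : 3 ≤ Fintype.card G)
    (hn1 : (Fintype.card G : F) ≠ 1) (hn2 : (Fintype.card G : F) ≠ 2)
    (hn4 : (Fintype.card G : F) ≠ 4) (x : XG G) :
    Nonempty (TerwilligerAlg F G x ≃ₐ[F]
      (Matrix (Fin 6) (Fin 6) F × Matrix (Fin 5) (Fin 5) F × F)) := by
  have hcard4 : Fintype.card G ≠ 4 := fun h => hn4 (by rw [h]; norm_num)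
  have hΓ : IsUnit (incidenceGram (Fintype.card G : F)).det := by
    rw [det_incidenceGram]
    exact (mul_ne_zero (pow_ne_zero 2 (sub_ne_zero.mpr hn1)) (sub_ne_zero.mpr hn4)).isUnit
  have hΛ : IsUnit (diagonal (valency (Fintype.card G : F))).det := by
    rw [det_diagonal_valency]
    exact (mul_ne_zero (pow_ne_zero 4 (sub_ne_zero.mpr hn1)) (sub_ne_zero.mpr hn2)).isUnit
  obtain ⟨v, hv₀, hv⟩ := exists_ne_zero_forall_incidence_mulVec_eq_zero F x
    (six_lt_card_of_sq_eq_one helem hcard hcard4)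
  rw [terwilligerAlg_eq_adjoin helem]
  obtain ⟨e⟩ := nonempty_adjoin_sup_adjoin_algEquiv (isMunnFamily_blockUnit helem hn1)
    isMunnFamily_primaryUnit hΓ hΛ (blockUnit_inl_ne_zero helem hcard hn1 0)
    primaryUnit_zero_ne_zero (blockUnit_mul_primaryUnit helem hn1)
    (primaryUnit_mul_blockUnit helem hn1) (vecMulVec_ne_zero hv₀ hv₀)
    (blockUnit_mul_vecMulVec hv v) (primaryUnit_mul_vecMulVec hv v)
  exact ⟨e.trans (AlgEquiv.prodCongr (reindexAlgEquiv F F finSumFinEquiv) AlgEquiv.refl)⟩
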